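/- If f : H_M → H_N is a contraction map, x, y ∈ H_M are Hamming distance preserving, and z ∈ H_M is on a Hamming path between x and y, then d_β(f(x),f(y)) = d_β(f(x),f(z)) + d_β(f(y),f(z)). -/

import Mathlib

open Finset

/-- Weighted Hamming distance on the hypercube `{0,1}^M` (bits modeled as `Bool`):
`d_γ(x,y) = Σ_i γ_i |x_i - y_i|`. -/
def hamDist {M : ℕ} (γ : Fin M → ℤ) (x y : Fin M → Bool) : ℤ :=
  ∑ i, if x i = y i then 0 else γ i

/-- `z` is on a Hamming path between `x` and `y`: `z` agrees with `x` (and `y`)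
on every coordinate where `x` and `y` agree. -/
def onHamPath {M : ℕ} (x y z : Fin M → Bool) : Prop :=
  ∀ k, x k = y k → z k = x k

lemma onHamPath.hamDist_eq_add {M : ℕ} {x y z : Fin M → Bool} (hz : onHamPath x y z)
    (γ : Fin M → ℤ) :
    hamDist γ x y = hamDist γ x z + hamDist γ y z := by
  unfold hamDist
  rw [← sum_add_distrib]
  refine sum_congr rfl fun i _ => ?_
  by_cases hxy : x i = y i
  · simp [← hxy, hz i hxy]
  · rcases eq_or_ne (z i) (x i) with hzx | hzx
    · simp [hzx, hxy, Ne.symm hxy]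
    · -- Two bits that both differ from `x i` agree.
      have hzy : z i = y i := (Bool.eq_not_of_ne hzx).trans (Bool.eq_not_of_ne (Ne.symm hxy)).symm
      simp [hzy, hxy]

lemma hamDist_triangle_right {M : ℕ} {γ : Fin M → ℤ} (hγ : ∀ i, 0 ≤ γ i)
    (x y z : Fin M → Bool) :
    hamDist γ x y ≤ hamDist γ x z + hamDist γ y z := by
  unfold hamDist
  rw [← sum_add_distrib]
  refine sum_le_sum fun i _ => ?_
  have hγi := hγ i
  by_cases hxz : x i = z i
  · simp [hxz, eq_comm]
  · rw [if_neg hxz]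
    split_ifs <;> linarith

theorem stmt_2_general {M N : ℕ} (α : Fin M → ℤ) (β : Fin N → ℤ) (hβ : ∀ r, 0 ≤ β r)
    (f : (Fin M → Bool) → (Fin N → Bool)) (x y z : Fin M → Bool)
    (hxz : hamDist β (f x) (f z) ≤ hamDist α x z)
    (hyz : hamDist β (f y) (f z) ≤ hamDist α y z)
    (hxy : hamDist α x y ≤ hamDist β (f x) (f y)) (hz : onHamPath x y z) :
    hamDist β (f x) (f y) = hamDist β (f x) (f z) + hamDist β (f y) (f z) := by
  refine le_antisymm (hamDist_triangle_right hβ _ _ _) ?_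
  calc
    hamDist β (f x) (f z) + hamDist β (f y) (f z)
    _ ≤ hamDist α x z + hamDist α y z := add_le_add hxz hyz
    _ = hamDist α x y := (hz.hamDist_eq_add α).symm
    _ ≤ hamDist β (f x) (f y) := hxy

theorem stmt_2 {M N : ℕ} (α : Fin M → ℤ) (β : Fin N → ℤ)
    (hα : ∀ i, 1 ≤ α i) (hβ : ∀ r, 1 ≤ β r)
    (f : (Fin M → Bool) → (Fin N → Bool))
    (hf : ∀ x x', hamDist β (f x) (f x') ≤ hamDist α x x')
    (x y : Fin M → Bool)
    (hdp : hamDist α x y = hamDist β (f x) (f y))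
    (z : Fin M → Bool) (hz : onHamPath x y z) :
    hamDist β (f x) (f y) = hamDist β (f x) (f z) + hamDist β (f y) (f z) :=
  stmt_2_general α β (fun r => zero_le_one.trans (hβ r)) f x y z (hf x z) (hf y z) hdp.le hz
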